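/- arXiv:1905.00514 — 6 statements merged into one kernel-verified Lean document; each statement's English description precedes it below -/
import Mathlib

section
/- Let 𝓘 be an ideal on ℕ and let x : ℕ → ℝ^k be an 𝓘-bounded sequence, i.e., there exists a constant c such that {n : ‖x n‖ > c} ∈ 𝓘. Then the 𝓘-core of x equals the (not necessarily closed) convex hull of the set of 𝓘-cluster points of x: core_x(𝓘) = convexHull ℝ (Γ_x(𝓘)). -/
open Filter Topology

/-!
A point outside the closed convex hull of the set `Γ` of cluster points is strictly separated from
`Γ` by a hyperplane. If `x` eventually stays in a compact set, then it tends to `Γ`, so it is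
eventually on the same side of the hyperplane as `Γ`, and so is its core. In any locally convex
space, the core is therefore the closed convex hull of `Γ`. In finite dimension the closure is
superfluous: `Γ` is compact and, by Carathéodory's theorem, its convex hull is the union of finitely
many continuous images of the compact sets `stdSimplex × Γ^m`.
-/

section ConvexCombinations

variable {𝕜 E : Type*} [Semiring 𝕜] [PartialOrder 𝕜] [AddCommMonoid E] [Module 𝕜 E]

variable (𝕜) in
/-- The set of convex combinations of `m` points of `s`, with repetitions allowed. It is written as
an image of `stdSimplex 𝕜 (Fin m) × s^m` so that it inherits compactness from `s`. -/
def convexCombinations (m : ℕ) (s : Set E) : Set E :=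
  (fun p : (Fin m → 𝕜) × (Fin m → E) ↦ ∑ i, p.1 i • p.2 i) ''
    (stdSimplex 𝕜 (Fin m) ×ˢ Set.univ.pi fun _ ↦ s)

theorem sum_smul_mem_convexCombinations {ι : Type*} [Fintype ι] {s : Set E} {w : ι → 𝕜} {z : ι → E}
    (hw : w ∈ stdSimplex 𝕜 ι) (hz : ∀ i, z i ∈ s) :
    ∑ i, w i • z i ∈ convexCombinations 𝕜 (Fintype.card ι) s := by
  let e := (Fintype.equivFin ι).symm
  exact ⟨(w ∘ e, z ∘ e), ⟨⟨fun i ↦ hw.1 (e i), (e.sum_comp w).trans hw.2⟩, fun i _ ↦ hz (e i)⟩,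
    e.sum_comp fun i ↦ w i • z i⟩

end ConvexCombinations

section Caratheodory

variable {𝕜 E : Type*} [Field 𝕜] [LinearOrder 𝕜] [IsStrictOrderedRing 𝕜]
  [AddCommGroup E] [Module 𝕜 E]

theorem convexCombinations_subset_convexHull (m : ℕ) (s : Set E) :
    convexCombinations 𝕜 m s ⊆ convexHull 𝕜 s := by
  rintro _ ⟨⟨w, z⟩, ⟨⟨w_nonneg, w_sum⟩, z_mem⟩, rfl⟩
  exact (convex_convexHull 𝕜 s).sum_mem (fun i _ ↦ w_nonneg i) w_sum
    fun i _ ↦ subset_convexHull 𝕜 s (z_mem i trivial)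

theorem convexHull_eq_iUnion_convexCombinations [FiniteDimensional 𝕜 E] (s : Set E) :
    convexHull 𝕜 s = ⋃ m ≤ Module.finrank 𝕜 E + 1, convexCombinations 𝕜 m s := by
  refine Set.Subset.antisymm (fun p hp ↦ ?_)
    (Set.iUnion₂_subset fun m _ ↦ convexCombinations_subset_convexHull m s)
  obtain ⟨ι, _, z, w, z_mem, z_indep, w_pos, w_sum, rfl⟩ := eq_pos_convex_span_of_mem_convexHull hp
  have card_le : Fintype.card ι ≤ Module.finrank 𝕜 E + 1 :=
    z_indep.card_le_finrank_succ.trans (Nat.succ_le_succ (Submodule.finrank_le _))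
  exact Set.mem_iUnion₂_of_mem card_le <|
    sum_smul_mem_convexCombinations ⟨fun i ↦ (w_pos i).le, w_sum⟩ fun i ↦ z_mem ⟨i, rfl⟩

end Caratheodory

section CompactConvexHull

variable {E : Type*} [AddCommGroup E] [Module ℝ E] [TopologicalSpace E] [ContinuousAdd E]
  [ContinuousSMul ℝ E] {s : Set E}

theorem isCompact_convexCombinations (hs : IsCompact s) (m : ℕ) :
    IsCompact (convexCombinations ℝ m s) :=
  ((isCompact_stdSimplex ℝ (Fin m)).prod (isCompact_univ_pi fun _ ↦ hs)).image (by fun_prop)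

theorem isCompact_convexHull [FiniteDimensional ℝ E] (hs : IsCompact s) :
    IsCompact (convexHull ℝ s) := by
  rw [convexHull_eq_iUnion_convexCombinations]
  exact (Set.finite_Iic _).isCompact_biUnion fun m _ ↦ isCompact_convexCombinations hs m

end CompactConvexHull

theorem isCompact_setOf_mapClusterPt {ι X : Type*} [TopologicalSpace X] [T2Space X] {F : Filter ι}
    {x : ι → X} {K : Set X} (hK : IsCompact K) (hx : ∀ᶠ i in F, x i ∈ K) :
    IsCompact {ℓ | MapClusterPt ℓ F x} :=
  hK.of_isClosed_subset isClosed_setOfPred_clusterPt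
    fun _ hℓ ↦ hK.isClosed.mem_of_mapClusterPt hℓ hx

section Core

variable {ι 𝕜 E : Type*} [Semiring 𝕜] [PartialOrder 𝕜] [AddCommGroup E] [Module 𝕜 E]
  [TopologicalSpace E] {F : Filter ι} {x : ι → E}

theorem iInter_closedConvexHull_image_subset {C : Set E} (hconv : Convex 𝕜 C) (hclosed : IsClosed C)
    (hx : ∀ᶠ i in F, x i ∈ C) : ⋂ S ∈ F, closedConvexHull 𝕜 (x '' S) ⊆ C :=
  (Set.biInter_subset_of_mem hx).trans <|
    closedConvexHull_min (Set.image_preimage_subset x C) hconv hclosed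

theorem closedConvexHull_clusterPts_subset_iInter (F : Filter ι) (x : ι → E) :
    closedConvexHull 𝕜 {ℓ | MapClusterPt ℓ F x} ⊆ ⋂ S ∈ F, closedConvexHull 𝕜 (x '' S) :=
  Set.subset_iInter₂ fun _ hS ↦ closedConvexHull_min
    (fun _ hℓ ↦ closure_subset_closedConvexHull <|
      clusterPt_iff_forall_mem_closure.1 hℓ _ (image_mem_map hS))
    convex_closedConvexHull isClosed_closedConvexHull

end Core

section RealCore

variable {ι E : Type*} [AddCommGroup E] [Module ℝ E] [TopologicalSpace E] [IsTopologicalAddGroup E]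
  [ContinuousSMul ℝ E] {F : Filter ι} {x : ι → E} {K : Set E}

theorem iInter_closedConvexHull_image_eq_closedConvexHull_clusterPts [LocallyConvexSpace ℝ E]
    (hK : IsCompact K) (hx : ∀ᶠ i in F, x i ∈ K) :
    ⋂ S ∈ F, closedConvexHull ℝ (x '' S) = closedConvexHull ℝ {ℓ | MapClusterPt ℓ F x} := by
  refine Set.Subset.antisymm (fun p hp ↦ ?_) (closedConvexHull_clusterPts_subset_iInter F x)
  by_contra p_notMem
  obtain ⟨f, u, f_lt, lt_f⟩ := geometric_hahn_banach_closed_point convex_closedConvexHull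
    isClosed_closedConvexHull p_notMem
  have tendsto_clusterPts : Tendsto x F (𝓝ˢ {ℓ | MapClusterPt ℓ F x}) :=
    hK.tendsto_nhdsSet_of_mapClusterPt hx fun _ _ hℓ ↦ hℓ
  have halfSpace_mem : {y | f y < u} ∈ 𝓝ˢ {ℓ | MapClusterPt ℓ F x} :=
    (isOpen_lt f.continuous continuous_const).mem_nhdsSet.2
      fun ℓ hℓ ↦ f_lt ℓ (subset_closedConvexHull hℓ)
  have eventually_le : ∀ᶠ i in F, f (x i) ≤ u :=
    (tendsto_clusterPts.eventually_mem halfSpace_mem).mono fun i (hi : f (x i) < u) ↦ hi.le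
  have f_le : f p ≤ u :=
    iInter_closedConvexHull_image_subset (convex_halfSpace_le f.toLinearMap.isLinear u)
      (isClosed_le f.continuous continuous_const) eventually_le hp
  exact lt_f.not_ge f_le

variable [T2Space E] [FiniteDimensional ℝ E]

variable (E) in
theorem locallyConvexSpace_of_finiteDimensional : LocallyConvexSpace ℝ E :=
  (toEuclidean (E := E)).toHomeomorph.isInducing.locallyConvexSpace
    (f := (toEuclidean (E := E)).toLinearMap)

theorem icore_eq_convexHull_clusterPts_general (hK : IsCompact K) (hx : ∀ᶠ i in F, x i ∈ K) :
    ⋂ S ∈ F, closedConvexHull ℝ (x '' S) = convexHull ℝ {ℓ | MapClusterPt ℓ F x} := by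
  have := locallyConvexSpace_of_finiteDimensional E
  have hull_closed : IsClosed (convexHull ℝ {ℓ | MapClusterPt ℓ F x}) :=
    (isCompact_convexHull (isCompact_setOf_mapClusterPt hK hx)).isClosed
  rw [iInter_closedConvexHull_image_eq_closedConvexHull_clusterPts hK hx,
    closedConvexHull_eq_closure_convexHull, hull_closed.closure_eq]

end RealCore

/-- Corollary 2.3 (first part): the `𝓘`-core of an `𝓘`-bounded sequence in `ℝ^k` is the
convex hull of its set of `𝓘`-cluster points. The ideal `𝓘` is represented by its dual
filter `F`; `𝓘`-boundedness of `x` means `{n : ‖x n‖ > c} ∈ 𝓘` for some `c`, i.e.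
`{n : ‖x n‖ ≤ c} ∈ F`. -/
theorem icore_eq_convexHull_clusterPts
    {k : ℕ} (F : Filter ℕ) (hF : F ≤ Filter.cofinite) [F.NeBot]
    (x : ℕ → EuclideanSpace ℝ (Fin k))
    (hx : ∃ c : ℝ, {n : ℕ | ‖x n‖ ≤ c} ∈ F) :
    ⋂ E ∈ F, closedConvexHull ℝ (x '' E) =
      convexHull ℝ {ℓ : EuclideanSpace ℝ (Fin k) | MapClusterPt ℓ F x} := by
  obtain ⟨c, hc⟩ := hx
  exact icore_eq_convexHull_clusterPts_general (isCompact_closedBall 0 c)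
    (mem_of_superset hc fun _ hn ↦ mem_closedBall_zero_iff.2 hn)
end

section
/- Let 𝓘 be an ideal on ℕ and let x : ℕ → ℝ^k be an 𝓘-bounded sequence, i.e., there exists a constant c such that {n : ‖x n‖ > c} ∈ 𝓘. Then a point ℓ belongs to the 𝓘-core of x if and only if there exist k+1 𝓘-cluster points z₁, …, z_{k+1} of x such that ℓ lies in the convex hull of {z₁, …, z_{k+1}}. -/
open Filter Topology

/-! The cluster points of `x` along `F` lie in every closed set that eventually contains `x`, which
gives one inclusion. Conversely, if a continuous functional separates `ℓ` from the closed convex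
hull of the cluster points, then by compactness `x` is eventually in an open half-space that stays
away from `ℓ`, so `ℓ` is not in the core. In finite dimension the set of cluster points is compact
and so is its convex hull, hence no closure is needed and Carathéodory's theorem applies. -/

section Caratheodory

open Module

variable {𝕜 E : Type*} [Field 𝕜] [LinearOrder 𝕜] [IsStrictOrderedRing 𝕜] [AddCommGroup E]
  [Module 𝕜 E]

theorem mem_convexHull_iff_exists_fin [FiniteDimensional 𝕜 E] {d : ℕ} (hd : finrank 𝕜 E ≤ d)
    {s : Set E} {p : E} :
    p ∈ convexHull 𝕜 s ↔
      ∃ z : Fin (d + 1) → E, (∀ i, z i ∈ s) ∧ p ∈ convexHull 𝕜 (Set.range z) := by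
  refine ⟨fun hp => ?_, fun ⟨z, hz, hp⟩ => convexHull_mono (Set.range_subset_iff.2 hz) hp⟩
  rw [convexHull_eq_union] at hp
  simp only [Set.mem_iUnion] at hp
  obtain ⟨t, hts, ht, hpt⟩ := hp
  have hcard : Fintype.card t ≤ d + 1 :=
    ht.card_le_finrank_succ.trans <| by grw [Submodule.finrank_le, hd]
  have : Nonempty t := (convexHull_nonempty_iff.1 ⟨p, hpt⟩).to_subtype
  obtain ⟨z, hz⟩ : ∃ z : Fin (d + 1) → t, Function.Surjective z :=
    Function.exists_surjective_iff.2
      ⟨inferInstance, Function.Embedding.nonempty_of_card_le (by rwa [Fintype.card_fin])⟩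
  refine ⟨Subtype.val ∘ z, fun i => hts (z i).2, ?_⟩
  rwa [hz.range_comp, Subtype.range_coe]

theorem convexHull_range_eq_image_stdSimplex {ι : Type*} [Fintype ι] (z : ι → E) :
    convexHull 𝕜 (Set.range z) = (fun w : ι → 𝕜 => ∑ i, w i • z i) '' stdSimplex 𝕜 ι := by
  classical
  calc convexHull 𝕜 (Set.range z)
    _ = convexHull 𝕜 (Fintype.linearCombination 𝕜 z '' Set.range fun i => Pi.single i 1) := by
      simp [← Set.range_comp, Function.comp_def]
    _ = Fintype.linearCombination 𝕜 z '' stdSimplex 𝕜 ι := by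
      rw [← LinearMap.image_convexHull, convexHull_rangle_single_eq_stdSimplex]

theorem convexHull_eq_image_stdSimplex_prod_pi [FiniteDimensional 𝕜 E] (s : Set E) :
    convexHull 𝕜 s =
      (fun q : (Fin (finrank 𝕜 E + 1) → 𝕜) × (Fin (finrank 𝕜 E + 1) → E) =>
        ∑ i, q.1 i • q.2 i) '' (stdSimplex 𝕜 _ ×ˢ Set.univ.pi fun _ => s) := by
  ext p
  simp only [mem_convexHull_iff_exists_fin le_rfl, convexHull_range_eq_image_stdSimplex,
    Set.mem_image, Prod.exists, Set.mem_prod, Set.mem_univ_pi]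
  constructor
  · rintro ⟨z, hz, w, hw, rfl⟩
    exact ⟨w, z, ⟨hw, hz⟩, rfl⟩
  · rintro ⟨w, z, ⟨hw, hz⟩, rfl⟩
    exact ⟨z, hz, w, hw, rfl⟩

end Caratheodory

theorem isCompact_convexHull_s2 {E : Type*} [AddCommGroup E] [Module ℝ E] [FiniteDimensional ℝ E]
    [TopologicalSpace E] [ContinuousAdd E] [ContinuousSMul ℝ E] {s : Set E} (hs : IsCompact s) :
    IsCompact (convexHull ℝ s) := by
  rw [convexHull_eq_image_stdSimplex_prod_pi]
  exact ((isCompact_stdSimplex ℝ _).prod (isCompact_univ_pi fun _ => hs)).image (by fun_prop)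

section ClusterPoints

variable {ι X : Type*} [TopologicalSpace X] {F : Filter ι} {x : ι → X} {K : Set X}

theorem eventually_mem_of_mapClusterPt_mem {U : Set X} (hK : IsCompact K)
    (hx : ∀ᶠ n in F, x n ∈ K) (hU : IsOpen U) (hcluster : ∀ p, MapClusterPt p F x → p ∈ U) :
    ∀ᶠ n in F, x n ∈ U := by
  by_contra hfreq
  have hKU : ∃ᶠ n in F, x n ∈ K \ U :=
    ((not_eventually.1 hfreq).and_eventually hx).mono fun _ h => ⟨h.2, h.1⟩
  obtain ⟨p, hp, hpx⟩ := (hK.diff hU).exists_mapClusterPt_of_frequently hKU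
  exact hp.2 (hcluster p hpx)

theorem isCompact_setOf_mapClusterPt_s2 [R1Space X] (hK : IsCompact K) (hx : ∀ᶠ n in F, x n ∈ K) :
    IsCompact {p | MapClusterPt p F x} :=
  hK.closure.of_isClosed_subset isClosed_setOfPred_clusterPt fun _ hp =>
    isClosed_closure.mem_of_mapClusterPt hp (hx.mono fun _ hn => subset_closure hn)

end ClusterPoints

section Core

variable {ι E : Type*} {F : Filter ι} {x : ι → E}

/-- The core of `x` along a filter `F`: the intersection of the closed convex hulls of the images
of the members of `F`. When `F` is the dual filter of an ideal `𝓘`, this is the `𝓘`-core of `x`. -/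
def icore [AddCommGroup E] [Module ℝ E] [TopologicalSpace E] (F : Filter ι) (x : ι → E) : Set E :=
  ⋂ A ∈ F, closedConvexHull ℝ (x '' A)

section TopologicalVectorSpace

variable [AddCommGroup E] [Module ℝ E] [TopologicalSpace E]

theorem icore_subset_of_eventually_mem {C : Set E} (hconv : Convex ℝ C) (hclosed : IsClosed C)
    (hx : ∀ᶠ n in F, x n ∈ C) : icore F x ⊆ C :=
  (Set.biInter_subset_of_mem hx).trans <|
    closedConvexHull_min (Set.image_preimage_subset x C) hconv hclosed

theorem closedConvexHull_setOf_mapClusterPt_subset_icore :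
    closedConvexHull ℝ {p | MapClusterPt p F x} ⊆ icore F x :=
  Set.subset_iInter₂ fun _ hA =>
    closedConvexHull_min
      (fun _ hp => isClosed_closedConvexHull.mem_of_mapClusterPt hp <|
        mem_of_superset hA fun _ hn => subset_closedConvexHull (Set.mem_image_of_mem x hn))
      convex_closedConvexHull isClosed_closedConvexHull

theorem icore_eq_closedConvexHull_setOf_mapClusterPt [IsTopologicalAddGroup E]
    [ContinuousSMul ℝ E] [LocallyConvexSpace ℝ E] {K : Set E} (hK : IsCompact K)
    (hx : ∀ᶠ n in F, x n ∈ K) :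
    icore F x = closedConvexHull ℝ {p | MapClusterPt p F x} := by
  refine Set.Subset.antisymm (fun p hp => ?_) closedConvexHull_setOf_mapClusterPt_subset_icore
  by_contra hpC
  obtain ⟨f, u, hfp, hfC⟩ :=
    geometric_hahn_banach_point_closed convex_closedConvexHull isClosed_closedConvexHull hpC
  have hfx : ∀ᶠ n in F, u < f (x n) :=
    eventually_mem_of_mapClusterPt_mem (U := {q | u < f q}) hK hx
      (isOpen_lt continuous_const f.continuous) fun q hq => hfC q (subset_closedConvexHull hq)
  have hcore : icore F x ⊆ {q | u ≤ f q} :=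
    icore_subset_of_eventually_mem (convex_halfSpace_ge f.toLinearMap.isLinear u)
      (isClosed_le continuous_const f.continuous) (hfx.mono fun _ => le_of_lt)
  exact hfp.not_ge (hcore hp)

end TopologicalVectorSpace

variable [NormedAddCommGroup E] [NormedSpace ℝ E] [FiniteDimensional ℝ E]

theorem icore_eq_convexHull_setOf_mapClusterPt (hx : F.IsBoundedUnder (· ≤ ·) (‖x ·‖)) :
    icore F x = convexHull ℝ {p | MapClusterPt p F x} := by
  have : ProperSpace E := FiniteDimensional.proper ℝ E
  obtain ⟨c, hc⟩ := hx.eventually_le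
  have hball : ∀ᶠ n in F, x n ∈ Metric.closedBall 0 c := by simpa using hc
  have hcompact := isCompact_closedBall (0 : E) c
  have hclosed : IsClosed (convexHull ℝ {p | MapClusterPt p F x}) :=
    (isCompact_convexHull_s2 (isCompact_setOf_mapClusterPt_s2 hcompact hball)).isClosed
  rw [icore_eq_closedConvexHull_setOf_mapClusterPt hcompact hball,
    closedConvexHull_eq_closure_convexHull, hclosed.closure_eq]

theorem mem_icore_iff_mem_convexHull_clusterPts_general {d : ℕ} (hd : Module.finrank ℝ E ≤ d)
    (hx : F.IsBoundedUnder (· ≤ ·) (‖x ·‖)) {ℓ : E} :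
    ℓ ∈ icore F x ↔
      ∃ z : Fin (d + 1) → E, (∀ i, MapClusterPt (z i) F x) ∧ ℓ ∈ convexHull ℝ (Set.range z) := by
  rw [icore_eq_convexHull_setOf_mapClusterPt hx, mem_convexHull_iff_exists_fin hd]
  rfl

end Core

/-- Corollary 2.3 (second part): a point `ℓ` belongs to the `𝓘`-core of an `𝓘`-bounded
sequence `x` in `ℝ^k` if and only if `ℓ` lies in the convex hull of `k + 1` many
`𝓘`-cluster points of `x`. The ideal `𝓘` is represented by its dual filter `F`. -/
theorem mem_icore_iff_mem_convexHull_clusterPts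
    {k : ℕ} (F : Filter ℕ) (hF : F ≤ Filter.cofinite) [F.NeBot]
    (x : ℕ → EuclideanSpace ℝ (Fin k))
    (hx : ∃ c : ℝ, {n : ℕ | ‖x n‖ ≤ c} ∈ F)
    (ℓ : EuclideanSpace ℝ (Fin k)) :
    ℓ ∈ ⋂ E ∈ F, closedConvexHull ℝ (x '' E) ↔
      ∃ z : Fin (k + 1) → EuclideanSpace ℝ (Fin k),
        (∀ i, MapClusterPt (z i) F x) ∧ ℓ ∈ convexHull ℝ (Set.range z) :=
  mem_icore_iff_mem_convexHull_clusterPts_general finrank_euclideanSpace_fin.le hx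
end

section
/- Let X be a real Banach space, 𝓘 an ideal on ℕ, and x : ℕ → X a sequence such that {n : x n ∉ K} ∈ 𝓘 for some compact set K ⊆ X. Then ℓ ∈ core_x(𝓘) if and only if there exists a Borel probability measure μ on X with μ(Γ_x(𝓘)) = 1 (i.e., μ is supported on the set of 𝓘-cluster points of x, which is compact) such that ℓ = ∫ z dμ(z), the Bochner integral of the identity with respect to μ. -/
open Filter Topology MeasureTheory

/-!
The core is the closed convex hull of the set `Γ` of cluster points. Indeed, a continuous linear
functional strictly separating a point from the closed convex hull of `Γ` provides a closed
half-space which is a neighbourhood of `Γ`; by compactness the sequence lies in it modulo the ideal,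
so the half-space contains the core.

The closed convex hull of a compact set `Γ` consists of the barycenters of probability measures on
`Γ`. These barycenters form a convex set, which contains `Γ` because of the Dirac masses. This set
is closed because the probability measures on `Γ` are compact for the topology of convergence in
distribution and the barycenter map is continuous into the weak topology of the Banach space.
-/

section ClusterPt

variable {E : Type*} [TopologicalSpace E] {G : Filter E} {K : Set E}

lemma isCompact_setOf_clusterPt [R1Space E] (hK : IsCompact K) (hKG : K ∈ G) :
    IsCompact {z | ClusterPt z G} :=
  hK.closure.of_isClosed_subset isClosed_setOfPred_clusterPt
    fun _ hz => hz.mem_closure_of_mem K hKG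

variable [AddCommGroup E] [Module ℝ E]

lemma closedConvexHull_setOf_clusterPt_subset {S : Set E} (hS : S ∈ G) :
    closedConvexHull ℝ {z | ClusterPt z G} ⊆ closedConvexHull ℝ S :=
  closedConvexHull_min
    (fun _ hz => closure_subset_closedConvexHull (hz.mem_closure_of_mem S hS))
    convex_closedConvexHull isClosed_closedConvexHull

theorem biInter_closedConvexHull_eq_closedConvexHull_setOf_clusterPt [IsTopologicalAddGroup E]
    [ContinuousSMul ℝ E] [LocallyConvexSpace ℝ E] (hK : IsCompact K) (hKG : K ∈ G) :
    ⋂ S ∈ G, closedConvexHull ℝ S = closedConvexHull ℝ {z | ClusterPt z G} := by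
  refine Set.Subset.antisymm (fun ℓ hℓ => ?_)
    (Set.subset_iInter₂ fun _ => closedConvexHull_setOf_clusterPt_subset)
  by_contra hℓ_notMem
  obtain ⟨φ, u, hφ_lt, hu_lt⟩ := geometric_hahn_banach_closed_point
    (convex_closedConvexHull (𝕜 := ℝ)) isClosed_closedConvexHull hℓ_notMem
  have halfSpace_mem : {z | φ z < u} ∈ G :=
    hK.le_nhdsSet_of_clusterPt hKG (fun _ _ hz => hz) <|
      (isOpen_lt φ.continuous continuous_const).mem_nhdsSet.2
        fun z hz => hφ_lt z (subset_closedConvexHull hz)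
  have core_subset_halfSpace : closedConvexHull ℝ {z | φ z < u} ⊆ {z | φ z ≤ u} :=
    closedConvexHull_min (fun z (hz : φ z < u) => hz.le) (convex_halfSpace_le φ.isLinear u)
      (isClosed_le φ.continuous continuous_const)
  exact hu_lt.not_ge (core_subset_halfSpace (Set.mem_iInter₂.1 hℓ _ halfSpace_mem))

end ClusterPt

section Barycenter

variable {T X : Type*} [TopologicalSpace T] [CompactSpace T] [MeasurableSpace T]
  [NormedAddCommGroup X]

lemma integrable_continuousMap [OpensMeasurableSpace T] (f : C(T, X)) (μ : Measure T)
    [IsFiniteMeasureOnCompacts μ] : Integrable f μ :=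
  f.continuous.integrable_of_hasCompactSupport (.of_compactSpace f)

variable [NormedSpace ℝ X]

lemma convex_range_integral [OpensMeasurableSpace T] (f : C(T, X)) :
    Convex ℝ (Set.range fun μ : ProbabilityMeasure T => ∫ t, f t ∂(μ : Measure T)) := by
  rintro _ ⟨μ, rfl⟩ _ ⟨ν, rfl⟩ a b ha hb hab
  let mixture : Measure T := ENNReal.ofReal a • (μ : Measure T) + ENNReal.ofReal b • (ν : Measure T)
  have : IsProbabilityMeasure mixture := ⟨by simp [mixture, ← ENNReal.ofReal_add ha hb, hab]⟩
  refine ⟨⟨mixture, this⟩, ?_⟩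
  calc ∫ t, f t ∂mixture
    _ = ∫ t, f t ∂(ENNReal.ofReal a • (μ : Measure T)) +
          ∫ t, f t ∂(ENNReal.ofReal b • (ν : Measure T)) :=
      integral_add_measure
        ((integrable_continuousMap f μ).smul_measure ENNReal.ofReal_ne_top)
        ((integrable_continuousMap f ν).smul_measure ENNReal.ofReal_ne_top)
    _ = a • ∫ t, f t ∂(μ : Measure T) + b • ∫ t, f t ∂(ν : Measure T) := by
      simp only [integral_smul_measure, ENNReal.toReal_ofReal, ha, hb]

variable [CompleteSpace X]

lemma continuous_toWeakSpace_integral [OpensMeasurableSpace T] (f : C(T, X)) :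
    Continuous fun μ : ProbabilityMeasure T =>
      toWeakSpace ℝ X (∫ t, f t ∂(μ : Measure T)) := by
  refine WeakBilin.continuous_of_continuous_eval _ fun φ => ?_
  have integral_comm (μ : ProbabilityMeasure T) :
      φ (∫ t, f t ∂(μ : Measure T)) = ∫ t, φ (f t) ∂(μ : Measure T) :=
    (φ.integral_comp_comm (integrable_continuousMap f μ)).symm
  exact (ProbabilityMeasure.continuous_integral_continuousMap
    ((φ : C(X, ℝ)).comp f)).congr fun μ => (integral_comm μ).symm

variable [T2Space T] [BorelSpace T]

lemma isClosed_range_integral (f : C(T, X)) :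
    IsClosed (Set.range fun μ : ProbabilityMeasure T => ∫ t, f t ∂(μ : Measure T)) := by
  rw [← Set.preimage_image_eq (Set.range _) (toWeakSpace ℝ X).injective, ← Set.range_comp]
  exact (isCompact_range (continuous_toWeakSpace_integral f)).isClosed.preimage
    (toWeakSpaceCLM ℝ X).continuous

theorem closedConvexHull_range_eq_range_integral (f : C(T, X)) :
    closedConvexHull ℝ (Set.range f) =
      Set.range fun μ : ProbabilityMeasure T => ∫ t, f t ∂(μ : Measure T) := by
  apply Set.Subset.antisymm
  · refine closedConvexHull_min ?_ (convex_range_integral f) (isClosed_range_integral f)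
    rintro _ ⟨t, rfl⟩
    exact ⟨⟨Measure.dirac t, inferInstance⟩, integral_dirac f t⟩
  · rintro _ ⟨μ, rfl⟩
    exact convex_closedConvexHull.integral_mem isClosed_closedConvexHull
      (ae_of_all _ fun t => subset_closedConvexHull (Set.mem_range_self t))
      (integrable_continuousMap f μ)

variable [MeasurableSpace X] [BorelSpace X]

theorem mem_closedConvexHull_iff_exists_integral_id {s : Set X} (hs : IsCompact s) (ℓ : X) :
    ℓ ∈ closedConvexHull ℝ s ↔
      ∃ μ : Measure X, IsProbabilityMeasure μ ∧ μ s = 1 ∧ ℓ = ∫ z, z ∂μ := by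
  have : CompactSpace s := isCompact_iff_compactSpace.1 hs
  have hs_meas : MeasurableSet s := hs.measurableSet
  have hs_emb : MeasurableEmbedding (Subtype.val : s → X) := .subtype_coe hs_meas
  have hull_eq := closedConvexHull_range_eq_range_integral (⟨Subtype.val, by fun_prop⟩ : C(s, X))
  simp only [ContinuousMap.coe_mk, Subtype.range_coe] at hull_eq
  rw [hull_eq]
  constructor
  · rintro ⟨μ, rfl⟩
    refine ⟨(μ : Measure s).map Subtype.val,
      Measure.isProbabilityMeasure_map hs_emb.measurable.aemeasurable, ?_, ?_⟩
    · simp [hs_emb.map_apply]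
    · exact (hs_emb.integral_map id).symm
  · rintro ⟨μ, _, hμs, rfl⟩
    have ae_mem : ∀ᵐ z ∂μ, z ∈ s := (mem_ae_iff_prob_eq_one hs_meas).2 hμs
    have := hs_emb.isProbabilityMeasure_comap (by simpa using ae_mem)
    refine ⟨⟨μ.comap Subtype.val, this⟩, ?_⟩
    calc ∫ z : s, (z : X) ∂μ.comap Subtype.val
      _ = ∫ z in s, z ∂μ := integral_subtype_comap hs_meas id
      _ = ∫ z, z ∂μ := by rw [Measure.restrict_eq_self_of_ae_mem ae_mem]

end Barycenter

theorem mem_icore_iff_barycenter_general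
    {ι X : Type*} [NormedAddCommGroup X] [NormedSpace ℝ X] [CompleteSpace X]
    [MeasurableSpace X] [BorelSpace X]
    (F : Filter ι) (x : ι → X) (hx : ∃ K : Set X, IsCompact K ∧ {n : ι | x n ∈ K} ∈ F) (ℓ : X) :
    ℓ ∈ ⋂ E ∈ F, closedConvexHull ℝ (x '' E) ↔
      ∃ μ : Measure X, IsProbabilityMeasure μ ∧
        μ {z : X | MapClusterPt z F x} = 1 ∧ ℓ = ∫ z, z ∂μ := by
  obtain ⟨K, hK, hKF⟩ := hx
  have core_eq : ⋂ E ∈ F, closedConvexHull ℝ (x '' E) =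
      closedConvexHull ℝ {z | MapClusterPt z F x} :=
    ((F.basis_sets.map x).biInter_mem (closedConvexHull ℝ).monotone).symm.trans
      (biInter_closedConvexHull_eq_closedConvexHull_setOf_clusterPt hK hKF)
  rw [core_eq]
  exact mem_closedConvexHull_iff_exists_integral_id (isCompact_setOf_clusterPt hK hKF) ℓ

/-- Corollary 2.4: for a sequence `x` in a real Banach space which lies in a compact set
modulo the ideal `𝓘` (represented by its dual filter `F`), a point `ℓ` belongs to the
`𝓘`-core of `x` if and only if `ℓ` is the barycenter of a Borel probability measure
supported on the set of `𝓘`-cluster points of `x`. -/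
theorem mem_icore_iff_barycenter
    {X : Type*} [NormedAddCommGroup X] [NormedSpace ℝ X] [CompleteSpace X]
    [MeasurableSpace X] [BorelSpace X]
    (F : Filter ℕ) (hF : F ≤ Filter.cofinite) [F.NeBot]
    (x : ℕ → X) (hx : ∃ K : Set X, IsCompact K ∧ {n : ℕ | x n ∈ K} ∈ F)
    (ℓ : X) :
    ℓ ∈ ⋂ E ∈ F, closedConvexHull ℝ (x '' E) ↔
      ∃ μ : Measure X, IsProbabilityMeasure μ ∧
        μ {z : X | MapClusterPt z F x} = 1 ∧ ℓ = ∫ z, z ∂μ :=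
  mem_icore_iff_barycenter_general F x hx ℓ
end

section
/- Let X be a first countable Hausdorff topological space, 𝓘 an ideal on ℕ, and x : ℕ → X a sequence such that {n : x n ∉ K} ∈ 𝓘 for some compact set K ⊆ X. Then x is 𝓘-convergent to ℓ (i.e., {n : x n ∉ U} ∈ 𝓘 for every neighborhood U of ℓ; equivalently, Tendsto x 𝓘* (𝓝 ℓ)) if and only if the set of 𝓘-cluster points of x is exactly {ℓ}. -/
open Filter Topology

section UniqueClusterPoint

variable {ι X : Type*} [TopologicalSpace X] {F : Filter ι} {u : ι → X} {a b : X}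

theorem eq_of_mapClusterPt_of_tendsto [T2Space X] (hb : MapClusterPt b F u)
    (ha : Tendsto u F (𝓝 a)) : b = a :=
  eq_of_nhds_neBot (ClusterPt.mono hb ha)

theorem setOf_mapClusterPt_eq_singleton_of_tendsto [T2Space X] [F.NeBot]
    (ha : Tendsto u F (𝓝 a)) : {z | MapClusterPt z F u} = {a} :=
  Set.eq_singleton_iff_unique_mem.2
    ⟨ha.mapClusterPt, fun _ hz ↦ eq_of_mapClusterPt_of_tendsto hz ha⟩

theorem tendsto_of_setOf_mapClusterPt_subset_singleton {K : Set X} (hK : IsCompact K)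
    (huK : ∀ᶠ i in F, u i ∈ K) (ha : {z | MapClusterPt z F u} ⊆ {a}) : Tendsto u F (𝓝 a) :=
  hK.tendsto_nhds_of_unique_mapClusterPt huK fun _ _ hz ↦ ha hz

theorem iconv_iff_clusterPts_eq_singleton_general [T2Space X] [F.NeBot] {K : Set X}
    (hK : IsCompact K) (huK : ∀ᶠ i in F, u i ∈ K) :
    Tendsto u F (𝓝 a) ↔ {z | MapClusterPt z F u} = {a} :=
  ⟨setOf_mapClusterPt_eq_singleton_of_tendsto,
    fun h ↦ tendsto_of_setOf_mapClusterPt_subset_singleton hK huK h.subset⟩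

end UniqueClusterPoint

/-- Lemma 4.1: if `x` is a sequence in a first countable Hausdorff topological space
lying in a compact set modulo the ideal `𝓘` (represented by its dual filter `F`), then
`x` is `𝓘`-convergent to `ℓ` iff `ℓ` is the unique `𝓘`-cluster point of `x`. -/
theorem iconv_iff_clusterPts_eq_singleton
    {X : Type*} [TopologicalSpace X] [T2Space X] [FirstCountableTopology X]
    (F : Filter ℕ) (hF : F ≤ Filter.cofinite) [F.NeBot]
    (x : ℕ → X) (hx : ∃ K : Set X, IsCompact K ∧ {n : ℕ | x n ∈ K} ∈ F)
    (ℓ : X) :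
    Tendsto x F (𝓝 ℓ) ↔ {z : X | MapClusterPt z F x} = {ℓ} := by
  obtain ⟨_, hK, hxK⟩ := hx
  exact iconv_iff_clusterPts_eq_singleton_general hK hxK
end

section
/- Let X be a real Banach space, 𝓘 an ideal on ℕ, and x : ℕ → X a sequence such that {n : x n ∉ K} ∈ 𝓘 for some compact set K ⊆ X. Then the 𝓘-core of x is a nonempty, convex, compact subset of X. -/
open Filter Topology

/-!
Every cluster point of `x` along the filter lies in the closure of each image `x '' E`, hence in the
core, and compactness of `K` provides one. On the other hand the core is a closed subset of the
closed convex hull of `K`, which is compact by Mazur's theorem.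
-/

section FilterCore

variable {𝕜 ι X : Type*} {F : Filter ι} {x : ι → X} {K : Set X} {a : X}

section Basic

variable [Semiring 𝕜] [PartialOrder 𝕜] [AddCommGroup X] [Module 𝕜 X]
  [TopologicalSpace X]

variable (𝕜 F x) in
/-- The core of a family `x` along a filter `F`: the intersection of the closed convex hulls of the
images under `x` of the members of `F`. The `𝓘`-core of a sequence is the case where `F` is the dual
filter `𝓘*` of the ideal `𝓘`. -/
def filterCore : Set X :=
  ⋂ E ∈ F, closedConvexHull 𝕜 (x '' E)

theorem convex_filterCore : Convex 𝕜 (filterCore 𝕜 F x) :=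
  convex_iInter₂ fun _ _ ↦ convex_closedConvexHull

theorem isClosed_filterCore : IsClosed (filterCore 𝕜 F x) :=
  isClosed_biInter fun _ _ ↦ isClosed_closedConvexHull

theorem mem_filterCore_of_mapClusterPt (ha : MapClusterPt a F x) : a ∈ filterCore 𝕜 F x :=
  Set.mem_iInter₂.2 fun _ hE ↦
    closure_subset_closedConvexHull (ha.mem_closure_of_mem _ (image_mem_map hE))

theorem filterCore_nonempty_of_frequently_mem (hK : IsCompact K) (hx : ∃ᶠ i in F, x i ∈ K) :
    (filterCore 𝕜 F x).Nonempty :=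
  let ⟨a, _, ha⟩ := hK.exists_mapClusterPt_of_frequently hx
  ⟨a, mem_filterCore_of_mapClusterPt ha⟩

theorem filterCore_subset_closedConvexHull (hx : ∀ᶠ i in F, x i ∈ K) :
    filterCore 𝕜 F x ⊆ closedConvexHull 𝕜 K :=
  (Set.biInter_subset_of_mem hx).trans
    ((closedConvexHull 𝕜).monotone (Set.image_preimage_subset x K))

end Basic

section QuasiComplete

variable [AddCommGroup X] [Module ℝ X] [UniformSpace X] [IsUniformAddGroup X]
  [ContinuousSMul ℝ X] [LocallyConvexSpace ℝ X] [QuasiCompleteSpace ℝ X]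

theorem isCompact_closedConvexHull_of_totallyBounded (hK : TotallyBounded K) :
    IsCompact (closedConvexHull ℝ K) := by
  rw [closedConvexHull_eq_closure_convexHull]
  exact isCompact_closure_of_totallyBounded_quasiComplete (𝕜 := ℝ) hK.convexHull

theorem isCompact_filterCore_of_eventually_mem (hK : TotallyBounded K)
    (hx : ∀ᶠ i in F, x i ∈ K) : IsCompact (filterCore ℝ F x) :=
  (isCompact_closedConvexHull_of_totallyBounded hK).of_isClosed_subset isClosed_filterCore
    (filterCore_subset_closedConvexHull hx)

end QuasiComplete

end FilterCore

theorem icore_nonempty_convex_isCompact_general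
    {ι X : Type*} [AddCommGroup X] [Module ℝ X] [UniformSpace X] [IsUniformAddGroup X]
    [ContinuousSMul ℝ X] [LocallyConvexSpace ℝ X] [QuasiCompleteSpace ℝ X]
    (F : Filter ι) [F.NeBot] (x : ι → X) (hx : ∃ K : Set X, IsCompact K ∧ ∀ᶠ i in F, x i ∈ K) :
    (filterCore ℝ F x).Nonempty ∧ Convex ℝ (filterCore ℝ F x) ∧ IsCompact (filterCore ℝ F x) := by
  obtain ⟨K, hK, hxK⟩ := hx
  exact ⟨filterCore_nonempty_of_frequently_mem hK hxK.frequently, convex_filterCore,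
    isCompact_filterCore_of_eventually_mem hK.totallyBounded hxK⟩

/-- From the proof of Corollary 2.4: if `x` is a sequence in a real Banach space lying
in a compact set modulo the ideal `𝓘` (represented by its dual filter `F`), then the
`𝓘`-core of `x` is nonempty, convex and compact. -/
theorem icore_nonempty_convex_isCompact
    {X : Type*} [NormedAddCommGroup X] [NormedSpace ℝ X] [CompleteSpace X]
    (F : Filter ℕ) (hF : F ≤ Filter.cofinite) [F.NeBot]
    (x : ℕ → X) (hx : ∃ K : Set X, IsCompact K ∧ {n : ℕ | x n ∈ K} ∈ F) :
    (⋂ E ∈ F, closedConvexHull ℝ (x '' E)).Nonempty ∧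
      Convex ℝ (⋂ E ∈ F, closedConvexHull ℝ (x '' E)) ∧
      IsCompact (⋂ E ∈ F, closedConvexHull ℝ (x '' E)) := by
  exact icore_nonempty_convex_isCompact_general F x hx
end

section
/- Let X = ℓ∞ be the Banach space of bounded real sequences (lp (fun _ : ℕ => ℝ) ∞) with the supremum norm, and let u_k denote the k-th unit vector. Define x : ℕ → X by x (2k) = u_k and x (2k+1) = -u_k. Then x is not norm-convergent (there is no ℓ with Tendsto x atTop (𝓝 ℓ)), yet its Knopp core is {0}: ⋂_{k ∈ ℕ} closedConvexHull ℝ {x n : n ≥ k} = {0}. -/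
open Filter Topology

/-! A continuous linear map sends the Knopp core of `x` into the Knopp core of its image, and in a
Hausdorff locally convex space a sequence tending to `a` has no core point other than `a`. So
coordinatewise convergence to `0` already forces the core into `{0}`, and `0`, being the midpoint of
the two terms of each antipodal pair, does lie in it. On the other hand, the limit of a sequence of
antipodal pairs equals its own negative, so norm convergence would make the unit vectors tend
to `0`. -/

section KnoppCore

variable {E F : Type*} [AddCommGroup E] [Module ℝ E] [TopologicalSpace E]
  [AddCommGroup F] [Module ℝ F] [TopologicalSpace F]

/-- The Knopp core of a sequence in a real topological vector space: the points lying in the closed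
convex hull of every tail. -/
def knoppCore (x : ℕ → E) : Set E :=
  ⋂ k : ℕ, closedConvexHull ℝ (x '' {n : ℕ | k ≤ n})

theorem knoppCore_subset_of_eventually_mem {x : ℕ → E} {s : Set E} (hconv : Convex ℝ s)
    (hclosed : IsClosed s) (hx : ∀ᶠ n in atTop, x n ∈ s) : knoppCore x ⊆ s := by
  obtain ⟨k, hk⟩ := eventually_atTop.1 hx
  exact (Set.iInter_subset _ k).trans
    (closedConvexHull_min (Set.image_subset_iff.2 hk) hconv hclosed)

theorem map_mem_knoppCore (φ : E →L[ℝ] F) {x : ℕ → E} {y : E} (hy : y ∈ knoppCore x) :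
    φ y ∈ knoppCore (φ ∘ x) := by
  refine Set.mem_iInter.2 fun k ↦ ?_
  have hsub : knoppCore x ⊆ φ ⁻¹' closedConvexHull ℝ (φ ∘ x '' {n | k ≤ n}) :=
    knoppCore_subset_of_eventually_mem (convex_closedConvexHull.linear_preimage φ.toLinearMap)
      (isClosed_closedConvexHull.preimage φ.continuous)
      ((eventually_ge_atTop k).mono fun n hn ↦ subset_closedConvexHull ⟨n, hn, rfl⟩)
  exact hsub hy

theorem knoppCore_subset_singleton_of_tendsto [IsTopologicalAddGroup E] [ContinuousConstSMul ℝ E]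
    [LocallyConvexSpace ℝ E] [T2Space E] {x : ℕ → E} {a : E} (hx : Tendsto x atTop (𝓝 a)) :
    knoppCore x ⊆ {a} := by
  intro y hy
  by_contra hya
  obtain ⟨U, ⟨hU, hUconv⟩, hUy⟩ :=
    (LocallyConvexSpace.convex_basis (𝕜 := ℝ) a).nhds_closure.mem_iff.1
      (isOpen_ne.mem_nhds (Ne.symm hya))
  have hy_closure : y ∈ closure U := knoppCore_subset_of_eventually_mem hUconv.closure
    isClosed_closure ((hx.eventually_mem hU).mono fun _ hn ↦ subset_closure hn) hy
  exact hUy hy_closure rfl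

theorem map_eq_of_mem_knoppCore_of_tendsto [IsTopologicalAddGroup F] [ContinuousConstSMul ℝ F]
    [LocallyConvexSpace ℝ F] [T2Space F] (φ : E →L[ℝ] F) {x : ℕ → E} {y : E} {b : F}
    (hy : y ∈ knoppCore x) (hx : Tendsto (fun n ↦ φ (x n)) atTop (𝓝 b)) : φ y = b :=
  knoppCore_subset_singleton_of_tendsto hx (map_mem_knoppCore φ hy)

theorem zero_mem_knoppCore_of_odd_eq_neg_even {x : ℕ → E}
    (hx : ∀ k, x (2 * k + 1) = -x (2 * k)) : 0 ∈ knoppCore x := by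
  refine Set.mem_iInter.2 fun k ↦ ?_
  have heven : x (2 * k) ∈ closedConvexHull ℝ (x '' {n | k ≤ n}) :=
    subset_closedConvexHull ⟨2 * k, by grind, rfl⟩
  have hodd : -x (2 * k) ∈ closedConvexHull ℝ (x '' {n | k ≤ n}) :=
    subset_closedConvexHull ⟨2 * k + 1, by grind, hx k⟩
  simpa only [midpoint_self_neg] using convex_closedConvexHull.midpoint_mem heven hodd

end KnoppCore

theorem tendsto_two_mul_atTop : Tendsto (fun k : ℕ ↦ 2 * k) atTop atTop :=
  tendsto_id.const_mul_atTop' two_pos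

theorem tendsto_two_mul_add_one_atTop : Tendsto (fun k : ℕ ↦ 2 * k + 1) atTop atTop :=
  (tendsto_add_atTop_nat 1).comp tendsto_two_mul_atTop

theorem tendsto_atTop_of_even_of_odd {α : Type*} {x : ℕ → α} {l : Filter α}
    (heven : Tendsto (fun k ↦ x (2 * k)) atTop l)
    (hodd : Tendsto (fun k ↦ x (2 * k + 1)) atTop l) : Tendsto x atTop l := by
  intro s hs
  obtain ⟨a, ha⟩ := eventually_atTop.1 (heven hs)
  obtain ⟨b, hb⟩ := eventually_atTop.1 (hodd hs)
  rw [mem_map]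
  filter_upwards [eventually_ge_atTop (2 * a + 2 * b + 1)] with n hn
  obtain ⟨k, rfl | rfl⟩ := n.even_or_odd'
  · exact ha k (by lia)
  · exact hb k (by lia)

theorem eq_zero_of_tendsto_of_odd_eq_neg_even {E : Type*} [AddGroup E] [IsAddTorsionFree E]
    [TopologicalSpace E] [ContinuousNeg E] [T2Space E] {x : ℕ → E} {ℓ : E}
    (hodd : ∀ k, x (2 * k + 1) = -x (2 * k)) (hx : Tendsto x atTop (𝓝 ℓ)) : ℓ = 0 := by
  have hneg : Tendsto (fun k ↦ x (2 * k + 1)) atTop (𝓝 (-ℓ)) := by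
    simpa only [hodd, Function.comp_apply] using (hx.comp tendsto_two_mul_atTop).neg
  exact self_eq_neg.1 (tendsto_nhds_unique (hx.comp tendsto_two_mul_add_one_atTop) hneg)

theorem tendsto_lpSingle_apply_cofinite {α : Type*} [DecidableEq α] {E : α → Type*}
    [∀ i, NormedAddCommGroup (E i)] (p : ENNReal) (v : ∀ i, E i) (j : α) :
    Tendsto (fun i ↦ lp.single p i (v i) j) cofinite (𝓝 0) := by
  refine tendsto_nhds_of_eventually_eq ?_
  filter_upwards [(Set.finite_singleton j).compl_mem_cofinite] with i hi
  exact lp.single_apply_ne p i (v i) (Ne.symm hi)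

section SignedUnitVectors

variable {E : ℕ → Type*} [∀ i, NormedAddCommGroup (E i)] {p : ENNReal} {v : ∀ i, E i}
  {x : ℕ → lp E p}

theorem tendsto_apply_of_signed_single (hx_even : ∀ k, x (2 * k) = lp.single p k (v k))
    (hx_odd : ∀ k, x (2 * k + 1) = -lp.single p k (v k)) (j : ℕ) :
    Tendsto (fun n ↦ x n j) atTop (𝓝 0) := by
  have hsingle : Tendsto (fun k ↦ lp.single p k (v k) j) atTop (𝓝 0) :=
    Nat.cofinite_eq_atTop ▸ tendsto_lpSingle_apply_cofinite p v j
  refine tendsto_atTop_of_even_of_odd ?_ ?_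
  · simpa only [hx_even] using hsingle
  · simpa only [hx_odd, lp.coeFn_neg, Pi.neg_apply, neg_zero] using hsingle.neg

variable [∀ i, NormedSpace ℝ (E i)] [Fact (1 ≤ p)]

theorem knopp_core_singleton_not_convergent_example_general
    (hv : ¬ Tendsto (fun k ↦ ‖v k‖) atTop (𝓝 0))
    (hx_even : ∀ k, x (2 * k) = lp.single p k (v k))
    (hx_odd : ∀ k, x (2 * k + 1) = -lp.single p k (v k)) :
    (¬ ∃ ℓ : lp E p, Tendsto x atTop (𝓝 ℓ)) ∧ knoppCore x = {0} := by
  have hanti (k : ℕ) : x (2 * k + 1) = -x (2 * k) := by rw [hx_odd, hx_even]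
  refine ⟨?_, Set.Subset.antisymm ?_ ?_⟩
  · rintro ⟨ℓ, hℓ⟩
    have : IsAddTorsionFree (lp E p) := .of_isTorsionFree ℝ _
    obtain rfl : ℓ = 0 := eq_zero_of_tendsto_of_odd_eq_neg_even hanti hℓ
    have hp : 0 < p := zero_lt_one.trans_le Fact.out
    refine hv ?_
    simpa [Function.comp_def, hx_even, lp.norm_single hp] using
      (hℓ.comp tendsto_two_mul_atTop).norm
  · intro y hy
    refine lp.ext (funext fun j ↦ ?_)
    exact map_eq_of_mem_knoppCore_of_tendsto (lp.evalCLM ℝ E p j) hy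
      (tendsto_apply_of_signed_single hx_even hx_odd j)
  · exact Set.singleton_subset_iff.2 (zero_mem_knoppCore_of_odd_eq_neg_even hanti)

end SignedUnitVectors

/-- Example after Proposition 4.2: the sequence `u₁, -u₁, u₂, -u₂, …` of (signed) unit
vectors in `ℓ∞` is not norm-convergent although its Knopp core is `{0}`. -/
theorem knopp_core_singleton_not_convergent_example
    (x : ℕ → lp (fun _ : ℕ => ℝ) ⊤)
    (hx_even : ∀ k : ℕ, x (2 * k) = lp.single ⊤ k (1 : ℝ))
    (hx_odd : ∀ k : ℕ, x (2 * k + 1) = -lp.single ⊤ k (1 : ℝ)) :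
    (¬ ∃ ℓ : lp (fun _ : ℕ => ℝ) ⊤, Tendsto x atTop (𝓝 ℓ)) ∧
      (⋂ k : ℕ, closedConvexHull ℝ (x '' {n : ℕ | k ≤ n})) =
        {(0 : lp (fun _ : ℕ => ℝ) ⊤)} :=
  knopp_core_singleton_not_convergent_example_general (by simp) hx_even hx_odd
end
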